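/- arXiv:2502.07915 — 5 statements merged into one kernel-verified Lean document; each statement's English description precedes it below -/
import Mathlib

section
/- Let a < b be real numbers and let f : [a,b] → ℝ be continuously differentiable on [a,b]. If f is not affine on [a,b], i.e., there exists c ∈ [a,b] with f(c) ≠ f(a) + (f(b) − f(a))·(c − a)/(b − a), then ∫_a^b √(1 + f'(x)²) dx > √((b − a)² + (f(b) − f(a))²). -/
/-!
With `D = f b - f a` and `L = √((b - a)² + D²)`, the Cauchy–Schwarz inequality for the vectors
`(b - a, D)` and `(1, f' t)` gives `(b - a) + D * f' t ≤ L * √(1 + f' t ^ 2)`, strictly unless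
`(b - a) * f' t = D`. The left-hand side integrates to `L ^ 2` over `[a, b]`. By the mean value
theorem, a non-affine `f` has some `t` with `(b - a) * f' t ≠ D`, so continuity makes the
integrated inequality strict, and dividing by `L > 0` gives the claim.
-/

lemma add_mul_le_sqrt_mul_sqrt (h D y : ℝ) :
    h + D * y ≤ √(h ^ 2 + D ^ 2) * √(1 + y ^ 2) := by
  rw [← Real.sqrt_mul (by positivity)]
  apply Real.le_sqrt_of_sq_le
  nlinarith [sq_nonneg (h * y - D)]

lemma add_mul_lt_sqrt_mul_sqrt (h D y : ℝ) (hne : h * y ≠ D) :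
    h + D * y < √(h ^ 2 + D ^ 2) * √(1 + y ^ 2) := by
  rw [← Real.sqrt_mul (by positivity)]
  apply Real.lt_sqrt_of_sq_lt
  have : 0 < (h * y - D) ^ 2 := by
    have := sub_ne_zero.mpr hne
    positivity
  nlinarith

/-- For a continuously differentiable function `f` on `[a, b]` (`a < b`)
which is not affine on `[a, b]`, the arc length `∫_a^b √(1 + f'(x)²) dx` of the graph
of `f` is strictly larger than the length `√((b − a)² + (f b − f a)²)` of the chord. -/
theorem arclength_gt_chord_of_not_affine
    (a b : ℝ) (hab : a < b) (f f' : ℝ → ℝ)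
    (hderiv : ∀ t ∈ Set.Icc a b, HasDerivWithinAt f (f' t) (Set.Icc a b) t)
    (hcont : ContinuousOn f' (Set.Icc a b))
    (hnotaffine : ∃ c ∈ Set.Icc a b, f c ≠ f a + (f b - f a) * (c - a) / (b - a)) :
    Real.sqrt ((b - a) ^ 2 + (f b - f a) ^ 2) <
      ∫ t in a..b, Real.sqrt (1 + (f' t) ^ 2) := by
  have hd : ∀ t ∈ Set.Ioo a b, HasDerivAt f (f' t) t := fun t ht =>
    (hderiv t (Set.Ioo_subset_Icc_self ht)).hasDerivAt (Icc_mem_nhds ht.1 ht.2)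
  have hf : ContinuousOn f (Set.Icc a b) := fun t ht => (hderiv t ht).continuousWithinAt
  have hba : 0 < b - a := sub_pos.mpr hab
  have hex : ∃ t ∈ Set.Icc a b, (b - a) * f' t ≠ f b - f a := by
    obtain ⟨c, hc, hne⟩ := hnotaffine
    have hac : a < c := by
      refine lt_of_le_of_ne hc.1 ?_
      rintro rfl
      simp at hne
    obtain ⟨t, ht, hslope⟩ := exists_hasDerivAt_eq_slope f f' hac
      (hf.mono (Set.Icc_subset_Icc_right hc.2))
      (fun x hx => hd x ⟨hx.1, hx.2.trans_le hc.2⟩)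
    refine ⟨t, ⟨ht.1.le, ht.2.le.trans hc.2⟩, fun h => hne ?_⟩
    have hca : c - a ≠ 0 := (sub_pos.mpr hac).ne'
    rw [eq_div_iff hca] at hslope
    rw [← h, mul_assoc, mul_div_cancel_left₀ _ hba.ne']
    linarith
  have hint : IntervalIntegrable f' MeasureTheory.volume a b :=
    hcont.intervalIntegrable_of_Icc hab.le
  have hftc : ∫ t in a..b, f' t = f b - f a :=
    intervalIntegral.integral_eq_sub_of_hasDerivAt_of_le hab.le hf hd hint
  obtain ⟨t₀, ht₀, hne⟩ := hex
  set L := √((b - a) ^ 2 + (f b - f a) ^ 2) with hL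
  have hLpos : 0 < L := Real.sqrt_pos.mpr (by positivity)
  have hLsq : L ^ 2 = (b - a) ^ 2 + (f b - f a) ^ 2 := Real.sq_sqrt (by positivity)
  have key : ∫ t in a..b, ((b - a) + (f b - f a) * f' t) <
      ∫ t in a..b, L * √(1 + (f' t) ^ 2) :=
    intervalIntegral.integral_lt_integral_of_continuousOn_of_le_of_exists_lt hab
      (by fun_prop) (by fun_prop)
      (fun t _ => add_mul_le_sqrt_mul_sqrt _ _ _)
      ⟨t₀, ht₀, add_mul_lt_sqrt_mul_sqrt _ _ _ hne⟩
  rw [intervalIntegral.integral_const_mul,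
    intervalIntegral.integral_add intervalIntegrable_const (hint.const_mul _),
    intervalIntegral.integral_const_mul, hftc, intervalIntegral.integral_const,
    smul_eq_mul] at key
  refine lt_of_mul_lt_mul_left ?_ hLpos.le
  linarith
end

section
/- Let n ≥ 2, let x_1 < x_2 < … < x_n and y_1, …, y_n be real numbers, let α ≥ 0, and set ȳ = (1/n) Σ_{j=1}^n y_j. Assume the data satisfy Σ_{i=1}^n x_i (y_i − ȳ) = 0. Then for all k_1, k_2 ∈ ℝ, J_α((k_1 x_1 + k_2, …, k_1 x_n + k_2)) ≥ J_α((ȳ, …, ȳ)), with equality if and only if k_1 = 0 and k_2 = ȳ. In other words, among all straight lines a_i = k_1 x_i + k_2, the functional J_α is uniquely minimized by the horizontal line through the average of the ordinates y_1, …, y_n. -/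
/-!
Write `ℓ i = k₁ x i + k₂`. The residuals `y i - ybar` have zero sum and, by the covariance
hypothesis, are orthogonal to `x`, hence to every line. By Pythagoras the fidelity term of `ℓ`
therefore exceeds that of the constant `ybar` by exactly `∑ (ℓ i - ybar) ^ 2`, while each segment
of the penalty is at least as long as its horizontal projection. So
`J ℓ ≥ J ybar + ∑ (ℓ i - ybar) ^ 2`, and equality forces `ℓ = ybar` at the distinct abscissas
`x 0 < x 1`, that is, `k₁ = 0` and `k₂ = ybar`.
-/

open Finset in
/-- The discrete regularized least-squares functional
`J_α(a) = Σ_{i=0}^{n-1} (y_i − a_i)² + α Σ_{i=0}^{n-2} √((a_{i+1} − a_i)² + (x_{i+1} − x_i)²)`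
for the broken line with vertices `(x_i, a_i)`, `i = 0, …, n−1`. -/
noncomputable def J (n : ℕ) (α : ℝ) (x y a : ℕ → ℝ) : ℝ :=
  ∑ i ∈ range n, (y i - a i) ^ 2 +
    α * ∑ i ∈ range (n - 1), Real.sqrt ((a (i + 1) - a i) ^ 2 + (x (i + 1) - x i) ^ 2)

open Finset in
/-- Pythagoras: the residuals about the mean are orthogonal to every line. -/
lemma fidelity_line_eq (n : ℕ) (x y : ℕ → ℝ) (ybar : ℝ)
    (hsum : ∑ i ∈ range n, (y i - ybar) = 0)
    (hcov : ∑ i ∈ range n, x i * (y i - ybar) = 0) (k₁ k₂ : ℝ) :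
    ∑ i ∈ range n, (y i - (k₁ * x i + k₂)) ^ 2 =
      ∑ i ∈ range n, (y i - ybar) ^ 2 + ∑ i ∈ range n, (k₁ * x i + k₂ - ybar) ^ 2 := by
  have h : ∑ i ∈ range n, (y i - (k₁ * x i + k₂)) ^ 2 =
      ∑ i ∈ range n, (y i - ybar) ^ 2 + ∑ i ∈ range n, (k₁ * x i + k₂ - ybar) ^ 2
        - 2 * k₁ * ∑ i ∈ range n, x i * (y i - ybar)
        - 2 * (k₂ - ybar) * ∑ i ∈ range n, (y i - ybar) := by
    simp only [mul_sum, ← sum_add_distrib, ← sum_sub_distrib]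
    exact sum_congr rfl fun i _ => by ring
  rw [h, hcov, hsum]
  ring

open Finset in
/-- The excess of `J` at a line over its value at the mean dominates the squared deviation of the
line from the mean. -/
lemma J_const_add_le_J_line (n : ℕ) (x y : ℕ → ℝ) (α : ℝ) (hα : 0 ≤ α) (ybar : ℝ)
    (hsum : ∑ i ∈ range n, (y i - ybar) = 0)
    (hcov : ∑ i ∈ range n, x i * (y i - ybar) = 0) (k₁ k₂ : ℝ) :
    J n α x y (fun _ => ybar) + ∑ i ∈ range n, (k₁ * x i + k₂ - ybar) ^ 2 ≤
      J n α x y (fun i => k₁ * x i + k₂) := by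
  have hpen : α * ∑ i ∈ range (n - 1), Real.sqrt ((ybar - ybar) ^ 2 + (x (i + 1) - x i) ^ 2) ≤
      α * ∑ i ∈ range (n - 1), Real.sqrt
        ((k₁ * x (i + 1) + k₂ - (k₁ * x i + k₂)) ^ 2 + (x (i + 1) - x i) ^ 2) := by
    refine mul_le_mul_of_nonneg_left (sum_le_sum fun i _ => Real.sqrt_le_sqrt ?_) hα
    have := sq_nonneg (k₁ * x (i + 1) + k₂ - (k₁ * x i + k₂))
    simpa using this
  simp only [J]
  rw [fidelity_line_eq n x y ybar hsum hcov k₁ k₂]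
  linarith

open Finset in
/-- paper's Lemma 1: assuming zero empirical covariance
`Σ x_i (y_i − ȳ) = 0`, among all straight lines `a_i = k₁ x_i + k₂` the functional `J_α`
is uniquely minimized by the horizontal line through the average `ȳ` of the ordinates. -/
theorem line_minimizer_is_average
    (n : ℕ) (hn : 2 ≤ n) (x y : ℕ → ℝ)
    (hx : ∀ i, i + 1 < n → x i < x (i + 1))
    (α : ℝ) (hα : 0 ≤ α)
    (ybar : ℝ) (hybar : ybar = (∑ j ∈ range n, y j) / n)
    (hcov : ∑ i ∈ range n, x i * (y i - ybar) = 0) :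
    ∀ k₁ k₂ : ℝ,
      J n α x y (fun _ => ybar) ≤ J n α x y (fun i => k₁ * x i + k₂) ∧
      (J n α x y (fun i => k₁ * x i + k₂) = J n α x y (fun _ => ybar) ↔
        k₁ = 0 ∧ k₂ = ybar) := by
  intro k₁ k₂
  have hn0 : (n : ℝ) ≠ 0 := by
    have : n ≠ 0 := by omega
    exact_mod_cast this
  have hsum : ∑ i ∈ range n, (y i - ybar) = 0 := by
    rw [sum_sub_distrib, sum_const, card_range, nsmul_eq_mul, hybar, mul_div_cancel₀ _ hn0,
      sub_self]
  have key := J_const_add_le_J_line n x y α hα ybar hsum hcov k₁ k₂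
  have hnn : ∀ i ∈ range n, 0 ≤ (k₁ * x i + k₂ - ybar) ^ 2 := fun i _ => sq_nonneg _
  have hS := sum_nonneg hnn
  refine ⟨by linarith, fun h => ?_, ?_⟩
  · have hz := (sum_eq_zero_iff_of_nonneg hnn).1 (le_antisymm (by linarith) hS)
    have h0 := pow_eq_zero_iff two_ne_zero |>.1 (hz 0 (mem_range.2 (by omega)))
    have h1 := pow_eq_zero_iff two_ne_zero |>.1 (hz 1 (mem_range.2 (by omega)))
    have hlt : x 0 < x 1 := hx 0 (by omega)
    have hk : k₁ = 0 := by
      have hm : k₁ * (x 1 - x 0) = 0 := by linarith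
      exact (mul_eq_zero.1 hm).resolve_right (by linarith)
    subst hk
    exact ⟨rfl, by linarith⟩
  · rintro ⟨rfl, rfl⟩
    simp
end

section
/- Let n ≥ 1, let x_1 < x_2 < … < x_n and y_1, …, y_n be real numbers, and let α ≥ 0. Then the functional J_α : ℝⁿ → ℝ attains its global minimum, and the global minimizer is unique; i.e., there exists exactly one a ∈ ℝⁿ such that J_α(a) ≤ J_α(b) for all b ∈ ℝⁿ. -/
/-- Extension of a vector `a ∈ ℝⁿ` to a function `ℕ → ℝ` (coordinates beyond `n` are `0`;
`J` only depends on the first `n` coordinates). -/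
def ext (n : ℕ) (a : Fin n → ℝ) : ℕ → ℝ := fun i => if h : i < n then a ⟨i, h⟩ else 0

/-- Midpoint convexity of `t ↦ √(t² + d²)`: the triangle inequality for the plane vectors `(p, d)`
and `(q, d)`. -/
theorem sqrt_midpoint_le (p q d : ℝ) :
    √(((p + q) / 2) ^ 2 + d ^ 2) ≤ (√(p ^ 2 + d ^ 2) + √(q ^ 2 + d ^ 2)) / 2 := by
  have hu := Real.sq_sqrt (by positivity : 0 ≤ p ^ 2 + d ^ 2)
  have hv := Real.sq_sqrt (by positivity : 0 ≤ q ^ 2 + d ^ 2)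
  have hu0 := Real.sqrt_nonneg (p ^ 2 + d ^ 2)
  have hv0 := Real.sqrt_nonneg (q ^ 2 + d ^ 2)
  set u := √(p ^ 2 + d ^ 2)
  set v := √(q ^ 2 + d ^ 2)
  -- Cauchy–Schwarz for `(p, d)` and `(q, d)`
  have hcs : p * q + d ^ 2 ≤ u * v := by
    refine le_of_abs_le (abs_le_of_sq_le_sq ?_ (mul_nonneg hu0 hv0))
    rw [mul_pow, hu, hv]
    nlinarith [sq_nonneg (p * d - q * d)]
  apply Real.sqrt_le_iff.mpr ⟨by positivity, by nlinarith⟩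

theorem J_midpoint_add_le (n : ℕ) {α : ℝ} (hα : 0 ≤ α) (x y a b : ℕ → ℝ) :
    J n α x y (fun i => (a i + b i) / 2) + (∑ i ∈ Finset.range n, (a i - b i) ^ 2) / 4
      ≤ (J n α x y a + J n α x y b) / 2 := by
  have h1 : ∑ i ∈ Finset.range n, (y i - (a i + b i) / 2) ^ 2
        + (∑ i ∈ Finset.range n, (a i - b i) ^ 2) / 4
      = (∑ i ∈ Finset.range n, (y i - a i) ^ 2 + ∑ i ∈ Finset.range n, (y i - b i) ^ 2) / 2 := by
    rw [← Finset.sum_add_distrib, Finset.sum_div, Finset.sum_div, ← Finset.sum_add_distrib]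
    exact Finset.sum_congr rfl fun i _ => by ring
  have h2 : ∑ i ∈ Finset.range (n - 1),
        √(((a (i + 1) + b (i + 1)) / 2 - (a i + b i) / 2) ^ 2 + (x (i + 1) - x i) ^ 2)
      ≤ (∑ i ∈ Finset.range (n - 1), √((a (i + 1) - a i) ^ 2 + (x (i + 1) - x i) ^ 2)
        + ∑ i ∈ Finset.range (n - 1), √((b (i + 1) - b i) ^ 2 + (x (i + 1) - x i) ^ 2)) / 2 := by
    rw [← Finset.sum_add_distrib, Finset.sum_div]
    refine Finset.sum_le_sum fun i _ => ?_
    rw [show (a (i + 1) + b (i + 1)) / 2 - (a i + b i) / 2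
      = ((a (i + 1) - a i) + (b (i + 1) - b i)) / 2 by ring]
    exact sqrt_midpoint_le _ _ _
  have h3 := mul_le_mul_of_nonneg_left h2 hα
  unfold J
  linarith

theorem sq_residual_le_J {n : ℕ} {α : ℝ} (hα : 0 ≤ α) (x y a : ℕ → ℝ) {i : ℕ} (hi : i < n) :
    (y i - a i) ^ 2 ≤ J n α x y a := by
  have h1 := Finset.single_le_sum (f := fun i => (y i - a i) ^ 2) (fun j _ => sq_nonneg _)
    (Finset.mem_range.mpr hi)
  have h2 : 0 ≤ α * ∑ i ∈ Finset.range (n - 1),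
      √((a (i + 1) - a i) ^ 2 + (x (i + 1) - x i) ^ 2) :=
    mul_nonneg hα (Finset.sum_nonneg fun _ _ => Real.sqrt_nonneg _)
  unfold J
  linarith

theorem continuous_J_ext (n : ℕ) (α : ℝ) (x y : ℕ → ℝ) :
    Continuous fun a : Fin n → ℝ => J n α x y (ext n a) := by
  have hc : ∀ i, Continuous fun a : Fin n → ℝ => ext n a i := by
    intro i
    unfold ext
    split_ifs <;> fun_prop
  unfold J
  fun_prop

theorem ext_apply_fin {n : ℕ} (a : Fin n → ℝ) (i : Fin n) : ext n a i = a i := by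
  simp [ext]

theorem ext_midpoint {n : ℕ} (a b : Fin n → ℝ) :
    ext n (fun i => (a i + b i) / 2) = fun i => (ext n a i + ext n b i) / 2 := by
  funext i
  unfold ext
  split_ifs <;> simp

/-- the functional `J_α : ℝⁿ → ℝ` attains its global minimum and the global
minimizer is unique: there exists exactly one `a ∈ ℝⁿ` with `J_α(a) ≤ J_α(b)` for all `b`. -/
theorem exists_unique_global_minimizer
    (n : ℕ) (hn : 1 ≤ n) (x y : ℕ → ℝ)
    (hx : ∀ i, i + 1 < n → x i < x (i + 1))
    (α : ℝ) (hα : 0 ≤ α) :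
    ∃! a : Fin n → ℝ, ∀ b : Fin n → ℝ,
      J n α x y (ext n a) ≤ J n α x y (ext n b) := by
  obtain ⟨a, ha⟩ : ∃ a : Fin n → ℝ, ∀ b, J n α x y (ext n a) ≤ J n α x y (ext n b) := by
    refine (continuous_J_ext n α x y).exists_forall_le' 0 ?_
    set M := J n α x y (ext n 0) with hM
    have hM0 : 0 ≤ M := (sq_nonneg _).trans (sq_residual_le_J hα x y (ext n 0) hn)
    -- `R = M + 1` satisfies `M ≤ R²`
    have hK : IsCompact (Set.univ.pi fun i : Fin n => Set.Icc (y i - (M + 1)) (y i + (M + 1))) :=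
      isCompact_univ_pi fun _ => isCompact_Icc
    filter_upwards [hK.compl_mem_cocompact] with b hb
    by_contra! hlt
    refine hb fun i _ => ?_
    have h := sq_residual_le_J hα x y (ext n b) i.isLt
    rw [ext_apply_fin] at h
    have habs := abs_le_of_sq_le_sq' (by nlinarith : (y i - b i) ^ 2 ≤ (M + 1) ^ 2) (by linarith)
    constructor <;> linarith [habs.1, habs.2]
  refine ⟨a, ha, fun b hb => ?_⟩
  have hmid := J_midpoint_add_le n hα x y (ext n a) (ext n b)
  rw [← ext_midpoint] at hmid
  have h1 := ha fun i => (a i + b i) / 2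
  have h2 := hb fun i => (a i + b i) / 2
  funext i
  have hs := Finset.single_le_sum (f := fun i => (ext n a i - ext n b i) ^ 2)
    (fun j _ => sq_nonneg _) (Finset.mem_range.mpr i.isLt)
  simp only [ext_apply_fin] at hs
  have h0 : (a i - b i) ^ 2 = 0 := le_antisymm (by linarith) (sq_nonneg _)
  linarith [pow_eq_zero_iff two_ne_zero |>.mp h0]
end

section
/- Let n ≥ 1, let x_1 < x_2 < … < x_n and y_1, …, y_n be real numbers, and let α ≥ 0. If a ∈ ℝⁿ is a global minimizer of J_α, then for every i = 1, …, n one has min_{j=1,…,n} y_j ≤ a_i ≤ max_{j=1,…,n} y_j; i.e., all ordinates of the vertices of the optimal broken line lie in the interval [min_j y_j, max_j y_j]. -/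
lemma abs_clamp_sub_clamp_le (m M s t : ℝ) :
    |max m (min M s) - max m (min M t)| ≤ |s - t| := by
  have h1 := abs_max_sub_max_le_max m (min M s) m (min M t)
  have h2 := abs_min_sub_min_le_max M s M t
  rw [sub_self, abs_zero, max_eq_right (abs_nonneg (min M s - min M t))] at h1
  rw [sub_self, abs_zero, max_eq_right (abs_nonneg (s - t))] at h2
  exact h1.trans h2

lemma sq_sub_clamp_lt {m M y t : ℝ} (hm : m ≤ y) (hM : y ≤ M) (ht : t < m ∨ M < t) :
    (y - max m (min M t)) ^ 2 < (y - t) ^ 2 := by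
  rcases ht with h | h
  · rw [min_eq_right (by linarith), max_eq_left h.le]
    nlinarith
  · rw [min_eq_left h.le, max_eq_right (by linarith)]
    nlinarith

lemma sq_sub_clamp_le {m M y t : ℝ} (hm : m ≤ y) (hM : y ≤ M) :
    (y - max m (min M t)) ^ 2 ≤ (y - t) ^ 2 := by
  by_cases ht : t < m ∨ M < t
  · exact (sq_sub_clamp_lt hm hM ht).le
  · push Not at ht
    rw [min_eq_right ht.2, max_eq_right ht.1]

/-- Clamping to an interval containing all the data strictly decreases the functional as soon as
one component of `a` lies outside that interval. -/
lemma J_clamp_lt {n : ℕ} {α : ℝ} (hα : 0 ≤ α) (x : ℕ → ℝ) {y a : ℕ → ℝ} {m M : ℝ}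
    (hm : ∀ j < n, m ≤ y j) (hM : ∀ j < n, y j ≤ M)
    {i : ℕ} (hi : i < n) (hai : a i < m ∨ M < a i) :
    J n α x y (fun j => max m (min M (a j))) < J n α x y a := by
  unfold J
  refine add_lt_add_of_lt_of_le ?_ (mul_le_mul_of_nonneg_left ?_ hα)
  · refine Finset.sum_lt_sum (fun j hj => ?_) ⟨i, Finset.mem_range.2 hi, ?_⟩
    · have hj := Finset.mem_range.1 hj
      exact sq_sub_clamp_le (hm j hj) (hM j hj)
    · exact sq_sub_clamp_lt (hm i hi) (hM i hi) hai
  · refine Finset.sum_le_sum fun j _ => Real.sqrt_le_sqrt ?_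
    have h := sq_le_sq.2 (abs_clamp_sub_clamp_le m M (a (j + 1)) (a j))
    linarith

open Finset in
/-- paper's Lemma 2: all ordinates of the vertices of the optimal broken line
lie in the interval `[min_j y_j, max_j y_j]`. -/
theorem minimizer_ordinates_between_extremes
    (n : ℕ) (hn : 1 ≤ n) (x y : ℕ → ℝ)
    (hx : ∀ i, i + 1 < n → x i < x (i + 1))
    (α : ℝ) (hα : 0 ≤ α)
    (a : ℕ → ℝ) (ha : ∀ b : ℕ → ℝ, J n α x y a ≤ J n α x y b) :
    ∀ i < n,
      (range n).inf' (Finset.nonempty_range_iff.mpr (by omega)) y ≤ a i ∧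
      a i ≤ (range n).sup' (Finset.nonempty_range_iff.mpr (by omega)) y := by
  intro i hi
  by_contra hcon
  have hout : a i < (range n).inf' (Finset.nonempty_range_iff.mpr (by omega)) y ∨
      (range n).sup' (Finset.nonempty_range_iff.mpr (by omega)) y < a i := by
    rwa [not_and_or, not_le, not_le] at hcon
  exact (ha _).not_gt (J_clamp_lt hα x
    (fun j hj => Finset.inf'_le y (mem_range.2 hj))
    (fun j hj => Finset.le_sup' y (mem_range.2 hj)) hi hout)
end

section
/- Let n ≥ 2, let x_1 < x_2 < … < x_n and y_1, …, y_n be real numbers, and let α ≥ 0. Let a ∈ ℝⁿ be a global minimizer of J_α, and for i = 1,…,n−1 let δ_i = arctan((a_{i+1} − a_i)/(x_{i+1} − x_i)) be the angle of inclination of the i-th link of the broken line to the Ox axis. Then max_{i=1,…,n} |a_i − y_i| ≤ α · max_{j=1,…,n−1} |sin δ_j| ≤ α · max_{j=1,…,n−1} |δ_j|. -/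
/-- The angle of inclination `δ_i = arctan((a_{i+1} − a_i)/(x_{i+1} − x_i))` of the `i`-th
link of the broken line to the `Ox` axis, `i = 0, …, n−2`. -/
noncomputable def linkAngle (x a : ℕ → ℝ) (i : ℕ) : ℝ :=
  Real.arctan ((a (i + 1) - a i) / (x (i + 1) - x i))

/-- The sine of the inclination angle of a link with horizontal extent `h` and vertical extent
`d`. -/
lemma sin_arctan_div (d h : ℝ) (hh : 0 < h) :
    Real.sin (Real.arctan (d / h)) = d / Real.sqrt (d ^ 2 + h ^ 2) := by
  have h1 : d ^ 2 + h ^ 2 = h ^ 2 * (1 + (d / h) ^ 2) := by field_simp; ring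
  rw [Real.sin_arctan, h1, Real.sqrt_mul (sq_nonneg h), Real.sqrt_sq hh.le]
  field_simp

lemma hasDerivAt_linkLength (d e h : ℝ) (hh : 0 < h) :
    HasDerivAt (fun t : ℝ => Real.sqrt ((d + t * e) ^ 2 + h ^ 2))
      (Real.sin (Real.arctan (d / h)) * e) 0 := by
  have hlin : HasDerivAt (fun t : ℝ => d + t * e) e 0 := by
    simpa using ((hasDerivAt_id (0 : ℝ)).mul_const e).const_add d
  have hpos : (d + 0 * e) ^ 2 + h ^ 2 ≠ 0 := by positivity
  have hroot := ((hlin.pow 2).add_const (h ^ 2)).sqrt hpos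
  refine hroot.congr_deriv ?_
  rw [sin_arctan_div d h hh]
  have : 0 < Real.sqrt (d ^ 2 + h ^ 2) := Real.sqrt_pos.mpr (by positivity)
  simp
  field_simp

open Finset in
/-- The stationarity equation of a minimizer in the direction `v`, in terms of the link angles. -/
lemma stationarity (n : ℕ) (x y : ℕ → ℝ) (hx : ∀ i, i + 1 < n → x i < x (i + 1))
    (α : ℝ) (a : ℕ → ℝ) (ha : ∀ b : ℕ → ℝ, J n α x y a ≤ J n α x y b) (v : ℕ → ℝ) :
    ∑ i ∈ range n, 2 * (a i - y i) * v i +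
      α * ∑ i ∈ range (n - 1), Real.sin (linkAngle x a i) * (v (i + 1) - v i) = 0 := by
  have hder : HasDerivAt (fun t : ℝ => J n α x y (fun i => a i + t * v i))
      (∑ i ∈ range n, 2 * (a i - y i) * v i +
        α * ∑ i ∈ range (n - 1), Real.sin (linkAngle x a i) * (v (i + 1) - v i)) 0 := by
    unfold J
    refine HasDerivAt.add (HasDerivAt.fun_sum fun i _ => ?_)
      ((HasDerivAt.fun_sum fun i hi => ?_).const_mul α)
    · have hlin : HasDerivAt (fun t : ℝ => y i - (a i + t * v i)) (-v i) 0 := by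
        simpa using (((hasDerivAt_id (0 : ℝ)).mul_const (v i)).const_add (a i)).const_sub (y i)
      refine (hlin.pow 2).congr_deriv ?_
      simp
      ring
    · have hi' : i + 1 < n := by have := mem_range.mp hi; omega
      have hlink := hasDerivAt_linkLength (a (i + 1) - a i) (v (i + 1) - v i) (x (i + 1) - x i)
        (sub_pos.mpr (hx i hi'))
      refine hlink.congr_of_eventuallyEq (Filter.Eventually.of_forall fun t => ?_)
      dsimp only
      congr 2
      ring
  have hmin : IsLocalMin (fun t : ℝ => J n α x y (fun i => a i + t * v i)) 0 :=
    Filter.Eventually.of_forall fun t => by simpa using ha (fun i => a i + t * v i)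
  exact hmin.hasDerivAt_eq_zero hder

open Finset in
/-- At most two links meet at a vertex: the total variation of a coordinate vector is at
most `2`. -/
lemma sum_abs_single_diff_le (m k : ℕ) :
    ∑ i ∈ range m, |(if i + 1 = k then (1 : ℝ) else 0) - (if i = k then 1 else 0)| ≤ 2 := by
  have hleft : ∑ i ∈ range m, (if i + 1 = k then (1 : ℝ) else 0) ≤ 1 := by
    rcases k with _ | k
    · simp
    · simp only [add_left_inj, sum_ite_eq']
      split_ifs <;> norm_num
  have hright : ∑ i ∈ range m, (if i = k then (1 : ℝ) else 0) ≤ 1 := by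
    simp only [sum_ite_eq']
    split_ifs <;> norm_num
  calc _ ≤ ∑ i ∈ range m, ((if i + 1 = k then (1 : ℝ) else 0) + (if i = k then 1 else 0)) :=
        sum_le_sum fun i _ => by split_ifs <;> norm_num
    _ ≤ 2 := by rw [sum_add_distrib]; linarith

open Finset in
/-- at a global minimizer `a` of `J_α`,
`max_i |a_i − y_i| ≤ α · max_j |sin δ_j| ≤ α · max_j |δ_j|`. -/
theorem residuals_le_alpha_mul_max_angle
    (n : ℕ) (hn : 2 ≤ n) (x y : ℕ → ℝ)
    (hx : ∀ i, i + 1 < n → x i < x (i + 1))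
    (α : ℝ) (hα : 0 ≤ α)
    (a : ℕ → ℝ) (ha : ∀ b : ℕ → ℝ, J n α x y a ≤ J n α x y b) :
    (range n).sup' (Finset.nonempty_range_iff.mpr (by omega)) (fun i => |a i - y i|) ≤
      α * (range (n - 1)).sup' (Finset.nonempty_range_iff.mpr (by omega))
        (fun j => |Real.sin (linkAngle x a j)|) ∧
    α * (range (n - 1)).sup' (Finset.nonempty_range_iff.mpr (by omega))
        (fun j => |Real.sin (linkAngle x a j)|) ≤
      α * (range (n - 1)).sup' (Finset.nonempty_range_iff.mpr (by omega))
        (fun j => |linkAngle x a j|) := by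
  have hne : (range (n - 1)).Nonempty := Finset.nonempty_range_iff.mpr (by omega)
  constructor
  · refine Finset.sup'_le _ _ fun k hk => ?_
    set M := (range (n - 1)).sup' hne (fun j => |Real.sin (linkAngle x a j)|)
    have hM : ∀ i ∈ range (n - 1), |Real.sin (linkAngle x a i)| ≤ M := fun i hi =>
      Finset.le_sup' (fun j => |Real.sin (linkAngle x a j)|) hi
    have hM0 : 0 ≤ M := (abs_nonneg _).trans (hM _ hne.choose_spec)
    have hstat := stationarity n x y hx α a ha (fun i => if i = k then 1 else 0)
    simp only [mul_ite, mul_one, mul_zero, sum_ite_eq', hk, if_true] at hstat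
    have hbound : |∑ i ∈ range (n - 1), Real.sin (linkAngle x a i) *
        ((if i + 1 = k then (1 : ℝ) else 0) - (if i = k then 1 else 0))| ≤ M * 2 :=
      calc _ ≤ ∑ i ∈ range (n - 1), |Real.sin (linkAngle x a i) *
              ((if i + 1 = k then (1 : ℝ) else 0) - (if i = k then 1 else 0))| :=
            abs_sum_le_sum_abs _ _
        _ ≤ ∑ i ∈ range (n - 1), M *
              |(if i + 1 = k then (1 : ℝ) else 0) - (if i = k then 1 else 0)| :=
            sum_le_sum fun i hi => by
              rw [abs_mul]
              exact mul_le_mul_of_nonneg_right (hM i hi) (abs_nonneg _)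
        _ ≤ M * 2 := by
            rw [← mul_sum]
            exact mul_le_mul_of_nonneg_left (sum_abs_single_diff_le _ _) hM0
    obtain ⟨hlo, hhi⟩ := abs_le.mp hbound
    have h1 := mul_le_mul_of_nonneg_left hlo hα
    have h2 := mul_le_mul_of_nonneg_left hhi hα
    rw [abs_le]
    constructor <;> linarith
  · refine mul_le_mul_of_nonneg_left (Finset.sup'_le _ _ fun j hj => ?_) hα
    exact Real.abs_sin_le_abs.trans (Finset.le_sup' (fun j => |linkAngle x a j|) hj)
end
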